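/- Let Ω_D ⊂ ℝ² be an open, bounded, convex domain. Then there exists a constant C > 0, depending only on Ω_D, such that for every μ ∈ [0,1], every ε ∈ (0,1], and every w ∈ C⁰(cl(Ω_D)) ∩ C²(Ω_D) satisfying 𝒩_μ w = 0 in Ω_D, w > 1 in Ω_D, and w = 1 + ε on ∂Ω_D, one has 1 + ε < w ≤ C throughout Ω_D. -/

import Mathlib

open Real Set

/-- Partial derivative in the first conical coordinate. -/
noncomputable def pd1 (f : ℝ × ℝ → ℝ) (x : ℝ × ℝ) : ℝ := fderiv ℝ f x (1, 0)

/-- Partial derivative in the second conical coordinate. -/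
noncomputable def pd2 (f : ℝ × ℝ → ℝ) (x : ℝ × ℝ) : ℝ := fderiv ℝ f x (0, 1)

/-- `D²f[a,b] = Σ_{i,j} a_i b_j ∂_{ij} f` evaluated at `x`. -/
noncomputable def D2 (f : ℝ × ℝ → ℝ) (a b x : ℝ × ℝ) : ℝ :=
    a.1 * b.1 * pd1 (pd1 f) x + a.1 * b.2 * pd1 (pd2 f) x
  + a.2 * b.1 * pd2 (pd1 f) x + a.2 * b.2 * pd2 (pd2 f) x

/-- The gradient `Df` as a vector of `ℝ × ℝ`. -/
noncomputable def gradv (f : ℝ × ℝ → ℝ) (x : ℝ × ℝ) : ℝ × ℝ := (pd1 f x, pd2 f x)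

/-- `Df · ξ` at `x = ξ`. -/
noncomputable def dotxi (f : ℝ × ℝ → ℝ) (x : ℝ × ℝ) : ℝ := pd1 f x * x.1 + pd2 f x * x.2

/-- `χ = ψ − Dψ·ξ`. -/
noncomputable def chiF (ψ : ℝ × ℝ → ℝ) (x : ℝ × ℝ) : ℝ := ψ x - dotxi ψ x

/-- The squared scaled sound speed `a² = |Dψ|² + χ² − 1`. -/
noncomputable def sqSound (ψ : ℝ × ℝ → ℝ) (x : ℝ × ℝ) : ℝ :=
  (pd1 ψ x) ^ 2 + (pd2 ψ x) ^ 2 + (chiF ψ x) ^ 2 - 1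

/-- `ℱ(μ,ψ) = a²(Δψ + D²ψ[ξ,ξ]) − μ D²ψ[Dψ − χξ, Dψ − χξ]`;
`μ = 1` is the conical Chaplygin potential equation. -/
noncomputable def Fop (μ : ℝ) (ψ : ℝ × ℝ → ℝ) (x : ℝ × ℝ) : ℝ :=
  sqSound ψ x * (pd1 (pd1 ψ) x + pd2 (pd2 ψ) x + D2 ψ x x x)
    - μ * D2 ψ (gradv ψ x - chiF ψ x • x) (gradv ψ x - chiF ψ x • x) x

/-- `b²(w) = w² − 1 + (1+|ξ|²)(|Dw|² + (Dw·ξ)²)`. -/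
noncomputable def b2 (w : ℝ × ℝ → ℝ) (x : ℝ × ℝ) : ℝ :=
  (w x) ^ 2 - 1
    + (1 + x.1 ^ 2 + x.2 ^ 2) * ((pd1 w x) ^ 2 + (pd2 w x) ^ 2 + (dotxi w x) ^ 2)

/-- The operator `𝒩_μ`. -/
noncomputable def Nop (μ : ℝ) (w : ℝ × ℝ → ℝ) (x : ℝ × ℝ) : ℝ :=
  b2 w x * (pd1 (pd1 w) x + pd2 (pd2 w) x + D2 w x x x)
    - μ * (1 + x.1 ^ 2 + x.2 ^ 2) *
        D2 w (gradv w x + dotxi w x • x) (gradv w x + dotxi w x • x) x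
    + 2 * ((1 - μ) * b2 w x + μ * ((w x) ^ 2 - 1)) * dotxi w x
    + ((2 - μ) * b2 w x + μ * ((w x) ^ 2 - 1)) * w x / (1 + x.1 ^ 2 + x.2 ^ 2)

/-- Local uniform ellipticity of `𝒩_μ` with respect to `w` on `Ω`: on each compact
subset the principal-part matrix `b²(w)(I₂+ξξᵀ) − μ(1+|ξ|²)qqᵀ`, `q = Dw + (Dw·ξ)ξ`,
has eigenvalues bounded below by a positive constant. -/
def LocUnifElliptic (μ : ℝ) (w : ℝ × ℝ → ℝ) (Ω : Set (ℝ × ℝ)) : Prop :=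
  ∀ K : Set (ℝ × ℝ), K ⊆ Ω → IsCompact K → ∃ lam : ℝ, 0 < lam ∧
    ∀ x ∈ K, ∀ v : ℝ × ℝ,
      lam * (v.1 ^ 2 + v.2 ^ 2) ≤
        b2 w x * (v.1 ^ 2 + v.2 ^ 2 + (x.1 * v.1 + x.2 * v.2) ^ 2)
          - μ * (1 + x.1 ^ 2 + x.2 ^ 2) *
              ((pd1 w x + dotxi w x * x.1) * v.1 + (pd2 w x + dotxi w x * x.2) * v.2) ^ 2

/-!
Put `ψ = w √(1 + |ξ|²)`, the trace on the plane `z = 1` of the extension of `w` to the cone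
homogeneous of degree one. The second-order part of `𝒩_μ`, with coefficients frozen at `w`, sends
`ψ` to `√(1 + |ξ|²) 𝒩_μ w`, so all lower-order terms are absorbed. By Cauchy–Schwarz that
second-order part is elliptic for `μ ≤ 1` and `w > 1`; hence `ψ + |ξ|²` has no interior local
maximum, and comparison with its boundary values bounds `w` from above. The lower bound is the
minimum principle for `w` itself: at a local minimum only the positive zeroth-order term and a
nonnegative multiple of second derivatives survive.
-/

section SecondDerivatives

variable {E : Type*} [NormedAddCommGroup E] [NormedSpace ℝ E] {f g : E → ℝ} {x : E}

theorem deriv_deriv_nonneg_of_isLocalMin {f : ℝ → ℝ} {t : ℝ} (hf : ContinuousAt f t)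
    (h : IsLocalMin f t) : 0 ≤ deriv (deriv f) t := by
  by_contra! hneg
  have hmax : IsLocalMax f t := isLocalMax_of_deriv_deriv_neg hneg h.deriv_eq_zero hf
  have hconst : f =ᶠ[nhds t] fun _ => f t := by
    filter_upwards [h, hmax] with y hmin hmax using le_antisymm hmax hmin
  simp [hconst.deriv.deriv_eq] at hneg

theorem differentiableAt_fderiv_of_contDiffAt_two (hf : ContDiffAt ℝ 2 f x) :
    DifferentiableAt ℝ (fderiv ℝ f) x :=
  (hf.fderiv_right (m := 1) (by norm_num)).differentiableAt one_ne_zero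

theorem eventually_differentiableAt_of_contDiffAt_two (hf : ContDiffAt ℝ 2 f x) :
    ∀ᶠ y in nhds x, DifferentiableAt ℝ f y :=
  (hf.eventually (by simp)).mono fun _ hy => hy.differentiableAt two_ne_zero

theorem deriv_deriv_line (hf : ContDiffAt ℝ 2 f x) (v : E) :
    deriv (deriv fun t : ℝ => f (x + t • v)) 0 = fderiv ℝ (fderiv ℝ f) x v v := by
  have hline (t : ℝ) : HasDerivAt (fun t : ℝ => x + t • v) v t := by
    simpa using ((hasDerivAt_id t).smul_const v).const_add x
  have hzero : x + (0 : ℝ) • v = x := by simp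
  have hnear : Filter.Tendsto (fun t : ℝ => x + t • v) (nhds 0) (nhds x) := by
    simpa only [hzero] using (hline 0).continuousAt.tendsto
  have hfirst : deriv (fun t : ℝ => f (x + t • v)) =ᶠ[nhds 0]
      fun t => fderiv ℝ f (x + t • v) v :=
    (hnear.eventually (eventually_differentiableAt_of_contDiffAt_two hf)).mono fun t ht =>
      (ht.hasFDerivAt.comp_hasDerivAt t (hline t)).deriv
  have hsecond : HasDerivAt (fun t : ℝ => fderiv ℝ f (x + t • v))
      (fderiv ℝ (fderiv ℝ f) x v) 0 :=
    (differentiableAt_fderiv_of_contDiffAt_two hf).hasFDerivAt.comp_hasDerivAt_of_eq 0 (hline 0)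
      hzero.symm
  rw [hfirst.deriv_eq]
  exact (((ContinuousLinearMap.apply ℝ ℝ v).hasFDerivAt).comp_hasDerivAt 0 hsecond).deriv

theorem fderiv_fderiv_nonneg_of_isLocalMin (hf : ContDiffAt ℝ 2 f x) (h : IsLocalMin f x)
    (v : E) : 0 ≤ fderiv ℝ (fderiv ℝ f) x v v := by
  have hline : Filter.Tendsto (fun t : ℝ => x + t • v) (nhds 0) (nhds x) :=
    (by fun_prop : Continuous fun t : ℝ => x + t • v).tendsto' 0 x (by simp)
  have hcont : ContinuousAt (fun t : ℝ => f (x + t • v)) 0 :=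
    hf.continuousAt.comp_of_eq (by fun_prop) (by simp)
  have hmin : IsLocalMin (fun t : ℝ => f (x + t • v)) 0 := by
    filter_upwards [hline.eventually h] with t ht using by simpa using ht
  exact deriv_deriv_line hf v ▸ deriv_deriv_nonneg_of_isLocalMin hcont hmin

theorem fderiv_fderiv_nonpos_of_isLocalMax (hf : ContDiffAt ℝ 2 f x) (h : IsLocalMax f x)
    (v : E) : fderiv ℝ (fderiv ℝ f) x v v ≤ 0 := by
  have hneg : fderiv ℝ (fderiv ℝ fun y => -f y) x = -fderiv ℝ (fderiv ℝ f) x := by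
    rw [show fderiv ℝ (fun y => -f y) = fun y => -fderiv ℝ f y from funext fun y => fderiv_fun_neg,
      fderiv_fun_neg]
  simpa [hneg] using fderiv_fderiv_nonneg_of_isLocalMin hf.neg h.neg v

theorem fderiv_fderiv_add_apply (hf : ContDiffAt ℝ 2 f x) (hg : ContDiffAt ℝ 2 g x) (a b : E) :
    fderiv ℝ (fderiv ℝ fun y => f y + g y) x a b =
      fderiv ℝ (fderiv ℝ f) x a b + fderiv ℝ (fderiv ℝ g) x a b := by
  have hfirst : fderiv ℝ (fun y => f y + g y) =ᶠ[nhds x] fun y => fderiv ℝ f y + fderiv ℝ g y := by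
    filter_upwards [eventually_differentiableAt_of_contDiffAt_two hf,
      eventually_differentiableAt_of_contDiffAt_two hg] with y hfy hgy using fderiv_fun_add hfy hgy
  rw [hfirst.fderiv_eq, fderiv_fun_add (differentiableAt_fderiv_of_contDiffAt_two hf)
    (differentiableAt_fderiv_of_contDiffAt_two hg)]
  rfl

theorem fderiv_fderiv_mul_apply (hf : ContDiffAt ℝ 2 f x) (hg : ContDiffAt ℝ 2 g x) (a b : E) :
    fderiv ℝ (fderiv ℝ fun y => f y * g y) x a b =
      f x * fderiv ℝ (fderiv ℝ g) x a b + fderiv ℝ f x a * fderiv ℝ g x b +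
        (g x * fderiv ℝ (fderiv ℝ f) x a b + fderiv ℝ g x a * fderiv ℝ f x b) := by
  have hf' := differentiableAt_fderiv_of_contDiffAt_two hf
  have hg' := differentiableAt_fderiv_of_contDiffAt_two hg
  have hfx := hf.differentiableAt two_ne_zero
  have hgx := hg.differentiableAt two_ne_zero
  have hfirst : fderiv ℝ (fun y => f y * g y) =ᶠ[nhds x]
      fun y => f y • fderiv ℝ g y + g y • fderiv ℝ f y := by
    filter_upwards [eventually_differentiableAt_of_contDiffAt_two hf,
      eventually_differentiableAt_of_contDiffAt_two hg] with y hfy hgy using fderiv_fun_mul hfy hgy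
  rw [hfirst.fderiv_eq, fderiv_fun_add (hfx.fun_smul hg') (hgx.fun_smul hf'),
    fderiv_fun_smul hfx hg', fderiv_fun_smul hgx hf']
  simp

end SecondDerivatives

section MaximumPrinciple

variable {X : Type*} [TopologicalSpace X] {Ω : Set X} {f : X → ℝ} {m M : ℝ}

theorem le_of_le_on_frontier_of_not_isLocalMax (hΩ : IsOpen Ω) (hK : IsCompact (closure Ω))
    (hf : ContinuousOn f (closure Ω)) (hmax : ∀ x ∈ Ω, ¬IsLocalMax f x)
    (hM : ∀ x ∈ frontier Ω, f x ≤ M) : ∀ x ∈ Ω, f x ≤ M := by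
  by_contra! h
  obtain ⟨x, hx, hMx⟩ := h
  obtain ⟨y, hy, hymax⟩ := hK.exists_isLocalMax_mem_open subset_closure hf (subset_closure hx)
    (fun z hz => (hM z (hΩ.frontier_eq ▸ hz)).trans_lt hMx) hΩ
  exact hmax y hy hymax

theorem lt_of_le_on_frontier_of_not_isLocalMin (hΩ : IsOpen Ω) (hK : IsCompact (closure Ω))
    (hf : ContinuousOn f (closure Ω)) (hmin : ∀ x ∈ Ω, ¬IsLocalMin f x)
    (hm : ∀ x ∈ frontier Ω, m ≤ f x) : ∀ x ∈ Ω, m < f x := by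
  have hle : ∀ x ∈ Ω, m ≤ f x := fun x hx => neg_le_neg_iff.1 <|
    le_of_le_on_frontier_of_not_isLocalMax hΩ hK hf.neg
      (fun y hy hmax => hmin y hy (by simpa using hmax.neg)) (fun y hy => neg_le_neg (hm y hy)) x hx
  refine fun x hx => (hle x hx).lt_of_ne fun heq => hmin x hx ?_
  filter_upwards [hΩ.mem_nhds hx] with y hy using heq ▸ hle y hy

end MaximumPrinciple

section Coordinates

variable {f g : ℝ × ℝ → ℝ} {x : ℝ × ℝ}

theorem fderiv_apply_eq_pd (f : ℝ × ℝ → ℝ) (x v : ℝ × ℝ) :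
    fderiv ℝ f x v = v.1 * pd1 f x + v.2 * pd2 f x := by
  have hv : v = v.1 • ((1 : ℝ), (0 : ℝ)) + v.2 • ((0 : ℝ), (1 : ℝ)) := by ext <;> simp
  conv_lhs => rw [hv, map_add, map_smul, map_smul]
  rfl

theorem fderiv_fderiv_apply_eq_D2 (hf : ContDiffAt ℝ 2 f x) (a b : ℝ × ℝ) :
    fderiv ℝ (fderiv ℝ f) x a b = D2 f a b x := by
  have hf' := differentiableAt_fderiv_of_contDiffAt_two hf
  have hswap (e : ℝ × ℝ) :
      fderiv ℝ (fun y => fderiv ℝ f y e) x a = fderiv ℝ (fderiv ℝ f) x a e := by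
    simp [fderiv_clm_apply hf' (differentiableAt_const e)]
  have h₁ : fderiv ℝ (pd1 f) x a = fderiv ℝ (fderiv ℝ f) x a (1, 0) := hswap _
  have h₂ : fderiv ℝ (pd2 f) x a = fderiv ℝ (fderiv ℝ f) x a (0, 1) := hswap _
  have hb : b = b.1 • ((1 : ℝ), (0 : ℝ)) + b.2 • ((0 : ℝ), (1 : ℝ)) := by ext <;> simp
  conv_lhs => rw [hb, map_add, map_smul, map_smul, ← h₁, ← h₂]
  simp only [fderiv_apply_eq_pd, D2, smul_eq_mul]
  ring

theorem D2_add (hf : ContDiffAt ℝ 2 f x) (hg : ContDiffAt ℝ 2 g x) (a b : ℝ × ℝ) :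
    D2 (fun y => f y + g y) a b x = D2 f a b x + D2 g a b x := by
  rw [← fderiv_fderiv_apply_eq_D2 (hf.add hg), fderiv_fderiv_add_apply hf hg,
    fderiv_fderiv_apply_eq_D2 hf, fderiv_fderiv_apply_eq_D2 hg]

theorem D2_mul (hf : ContDiffAt ℝ 2 f x) (hg : ContDiffAt ℝ 2 g x) (a b : ℝ × ℝ) :
    D2 (fun y => f y * g y) a b x =
      f x * D2 g a b x + fderiv ℝ f x a * fderiv ℝ g x b +
        (g x * D2 f a b x + fderiv ℝ g x a * fderiv ℝ f x b) := by
  rw [← fderiv_fderiv_apply_eq_D2 (hf.mul hg), fderiv_fderiv_mul_apply hf hg,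
    fderiv_fderiv_apply_eq_D2 hf, fderiv_fderiv_apply_eq_D2 hg]

end Coordinates

section Trace

open Matrix
open scoped MatrixOrder Matrix.Norms.L2Operator

theorem trace_mul_neg_of_posSemidef {n : Type*} [Fintype n] {A H : Matrix n n ℝ}
    (hA : A.PosSemidef) (hA₀ : A ≠ 0) (hH : ∀ v, v ≠ 0 → v ⬝ᵥ H *ᵥ v < 0) :
    (A * H).trace < 0 := by
  classical
  obtain ⟨B, rfl⟩ := CStarAlgebra.nonneg_iff_eq_star_mul_self.1 hA.nonneg
  have hrows : (star B * B * H).trace = ∑ i, B i ⬝ᵥ H *ᵥ B i := by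
    rw [Matrix.mul_assoc, trace_mul_comm, Matrix.mul_assoc, trace]
    refine Finset.sum_congr rfl fun i _ => ?_
    simp only [diag_apply, mul_apply, star_apply, star_trivial, dotProduct, mulVec]
  obtain ⟨i, hi⟩ : ∃ i, B i ≠ 0 := by
    by_contra! hB
    exact hA₀ (by simp [show B = 0 from funext hB])
  have hnonpos (i : n) : B i ⬝ᵥ H *ᵥ B i ≤ 0 := by
    rcases eq_or_ne (B i) 0 with h | h
    · simp [h]
    · exact (hH _ h).le
  rw [hrows]
  exact Finset.sum_neg' (fun i _ => hnonpos i) ⟨i, Finset.mem_univ i, hH _ hi⟩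

end Trace

/-- The Euclidean norm `√(1 + |ξ|²)` of the point `(ξ, 1)` of the plane `z = 1` in `ℝ³`. -/
noncomputable def liftNorm (x : ℝ × ℝ) : ℝ := √(1 + x.1 ^ 2 + x.2 ^ 2)

theorem liftNorm_sq (x : ℝ × ℝ) : liftNorm x ^ 2 = 1 + x.1 ^ 2 + x.2 ^ 2 :=
  Real.sq_sqrt (by positivity)

theorem one_le_liftNorm (x : ℝ × ℝ) : 1 ≤ liftNorm x :=
  Real.one_le_sqrt.2 (by linarith [sq_nonneg x.1, sq_nonneg x.2])

theorem liftNorm_pos (x : ℝ × ℝ) : 0 < liftNorm x := one_pos.trans_le (one_le_liftNorm x)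

theorem contDiff_liftNorm {n : WithTop ℕ∞} : ContDiff ℝ n liftNorm :=
  ContDiff.sqrt (by fun_prop) fun x => by positivity

theorem continuous_liftNorm : Continuous liftNorm := (contDiff_liftNorm (n := 0)).continuous

theorem fderiv_liftNorm_sq_apply (x v : ℝ × ℝ) :
    fderiv ℝ (fun y => liftNorm y ^ 2) x v = 2 * (x.1 * v.1 + x.2 * v.2) := by
  have h := ((hasFDerivAt_fst (𝕜 := ℝ) (p := x)).pow 2 |>.const_add 1).fun_add
    ((hasFDerivAt_snd (𝕜 := ℝ) (p := x)).pow 2)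
  simp only [liftNorm_sq, h.fderiv, Nat.add_one_sub_one, pow_one, nsmul_eq_mul, Nat.cast_ofNat,
    add_apply, smul_apply, ContinuousLinearMap.coe_fst', ContinuousLinearMap.coe_snd', smul_eq_mul]
  ring

theorem liftNorm_mul_fderiv_apply (x v : ℝ × ℝ) :
    liftNorm x * fderiv ℝ liftNorm x v = x.1 * v.1 + x.2 * v.2 := by
  have h := fderiv_liftNorm_sq_apply x v
  rw [fderiv_fun_pow _ (contDiff_liftNorm.differentiable one_ne_zero x)] at h
  simp only [Nat.add_one_sub_one, pow_one, nsmul_eq_mul, Nat.cast_ofNat, smul_apply,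
    smul_eq_mul] at h
  linarith

theorem D2_liftNorm_sq (a b x : ℝ × ℝ) :
    D2 (fun y => liftNorm y ^ 2) a b x = 2 * (a.1 * b.1 + a.2 * b.2) := by
  have h₁ : pd1 (fun y => liftNorm y ^ 2) = fun y => 2 * y.1 :=
    funext fun y => by simp [pd1, fderiv_liftNorm_sq_apply]
  have h₂ : pd2 (fun y => liftNorm y ^ 2) = fun y => 2 * y.2 :=
    funext fun y => by simp [pd2, fderiv_liftNorm_sq_apply]
  have hfst (v : ℝ × ℝ) : fderiv ℝ (fun y : ℝ × ℝ => 2 * y.1) x v = 2 * v.1 := by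
    simp [fderiv_const_mul, fderiv_fst]
  have hsnd (v : ℝ × ℝ) : fderiv ℝ (fun y : ℝ × ℝ => 2 * y.2) x v = 2 * v.2 := by
    simp [fderiv_const_mul, fderiv_snd]
  rw [D2, h₁, h₂]
  simp only [pd1, pd2, hfst, hsnd]
  ring

theorem liftNorm_mul_D2 (a b x : ℝ × ℝ) :
    liftNorm x * D2 liftNorm a b x =
      a.1 * b.1 + a.2 * b.2 - fderiv ℝ liftNorm x a * fderiv ℝ liftNorm x b := by
  have h := D2_liftNorm_sq a b x
  simp only [sq] at h
  rw [D2_mul contDiff_liftNorm.contDiffAt contDiff_liftNorm.contDiffAt] at h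
  linarith

/-- The trace `ψ = w √(1 + |ξ|²)` on the plane `z = 1` of the function on the cone over the domain
which is homogeneous of degree one and restricts to `w` on the unit sphere. -/
noncomputable def conePotential (w : ℝ × ℝ → ℝ) (x : ℝ × ℝ) : ℝ := w x * liftNorm x

theorem D2_conePotential {w : ℝ × ℝ → ℝ} {x : ℝ × ℝ} (hw : ContDiffAt ℝ 2 w x) (a b : ℝ × ℝ) :
    D2 (conePotential w) a b x = liftNorm x * D2 w a b x +
      (fderiv ℝ w x a * (x.1 * b.1 + x.2 * b.2) + fderiv ℝ w x b * (x.1 * a.1 + x.2 * a.2))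
        / liftNorm x +
      w x * ((a.1 * b.1 + a.2 * b.2) / liftNorm x -
        (x.1 * a.1 + x.2 * a.2) * (x.1 * b.1 + x.2 * b.2) / liftNorm x ^ 3) := by
  have hs := (liftNorm_pos x).ne'
  have hD (v : ℝ × ℝ) : fderiv ℝ liftNorm x v = (x.1 * v.1 + x.2 * v.2) / liftNorm x := by
    rw [← liftNorm_mul_fderiv_apply, mul_div_cancel_left₀ _ hs]
  have hD2 : D2 liftNorm a b x = (a.1 * b.1 + a.2 * b.2 -
      fderiv ℝ liftNorm x a * fderiv ℝ liftNorm x b) / liftNorm x := by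
    rw [← liftNorm_mul_D2, mul_div_cancel_left₀ _ hs]
  rw [show conePotential w = fun y => w y * liftNorm y from rfl,
    D2_mul hw contDiff_liftNorm.contDiffAt, hD2, hD, hD]
  field_simp
  ring

/-- The vector `q = Dw + (Dw·ξ)ξ` entering the principal part of `𝒩_μ`; up to the factor
`1 + |ξ|²` it is the gradient of `w` for the round metric in the coordinates `ξ`. -/
noncomputable def sphGrad (w : ℝ × ℝ → ℝ) (x : ℝ × ℝ) : ℝ × ℝ := gradv w x + dotxi w x • x

theorem sphGrad_fst (w : ℝ × ℝ → ℝ) (x : ℝ × ℝ) :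
    (sphGrad w x).1 = pd1 w x + dotxi w x * x.1 := rfl

theorem sphGrad_snd (w : ℝ × ℝ → ℝ) (x : ℝ × ℝ) :
    (sphGrad w x).2 = pd2 w x + dotxi w x * x.2 := rfl

/-- The second-order part of `𝒩_μ`, with coefficients evaluated at `w`, as a linear operator
acting on `f`. -/
noncomputable def principalPart (μ : ℝ) (w f : ℝ × ℝ → ℝ) (x : ℝ × ℝ) : ℝ :=
  b2 w x * (pd1 (pd1 f) x + pd2 (pd2 f) x + D2 f x x x)
    - μ * (1 + x.1 ^ 2 + x.2 ^ 2) * D2 f (sphGrad w x) (sphGrad w x) x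

section PrincipalPart

open Matrix

variable {μ : ℝ} {w f : ℝ × ℝ → ℝ} {x : ℝ × ℝ}

theorem laplacian_conePotential (hw : ContDiffAt ℝ 2 w x) :
    pd1 (pd1 (conePotential w)) x + pd2 (pd2 (conePotential w)) x + D2 (conePotential w) x x x =
      liftNorm x * (pd1 (pd1 w) x + pd2 (pd2 w) x + D2 w x x x) +
        2 * (liftNorm x * dotxi w x + w x / liftNorm x) := by
  have h₁ : pd1 (pd1 (conePotential w)) x = D2 (conePotential w) (1, 0) (1, 0) x := by simp [D2]
  have h₂ : pd2 (pd2 (conePotential w)) x = D2 (conePotential w) (0, 1) (0, 1) x := by simp [D2]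
  have hs := (liftNorm_pos x).ne'
  rw [h₁, h₂, D2_conePotential hw, D2_conePotential hw, D2_conePotential hw]
  simp only [fderiv_apply_eq_pd, dotxi, D2]
  field_simp
  rw [liftNorm_sq]
  ring

theorem D2_conePotential_sphGrad (hw : ContDiffAt ℝ 2 w x) :
    D2 (conePotential w) (sphGrad w x) (sphGrad w x) x =
      liftNorm x * D2 w (sphGrad w x) (sphGrad w x) x +
        (2 * (liftNorm x * dotxi w x) + w x / liftNorm x) *
          (pd1 w x ^ 2 + pd2 w x ^ 2 + dotxi w x ^ 2) := by
  have hs := (liftNorm_pos x).ne'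
  have hDw : fderiv ℝ w x (sphGrad w x) = pd1 w x ^ 2 + pd2 w x ^ 2 + dotxi w x ^ 2 := by
    rw [fderiv_apply_eq_pd, sphGrad_fst, sphGrad_snd, dotxi]
    ring
  have hradial : x.1 * (sphGrad w x).1 + x.2 * (sphGrad w x).2 = liftNorm x ^ 2 * dotxi w x := by
    rw [sphGrad_fst, sphGrad_snd, liftNorm_sq, dotxi]
    ring
  have hnorm : (sphGrad w x).1 * (sphGrad w x).1 + (sphGrad w x).2 * (sphGrad w x).2 =
      pd1 w x ^ 2 + pd2 w x ^ 2 + dotxi w x ^ 2 + liftNorm x ^ 2 * dotxi w x ^ 2 := by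
    rw [sphGrad_fst, sphGrad_snd, liftNorm_sq, dotxi]
    ring
  rw [D2_conePotential hw, hDw, hradial, hnorm]
  field_simp
  ring

theorem principalPart_conePotential (hw : ContDiffAt ℝ 2 w x) :
    principalPart μ w (conePotential w) x = liftNorm x * Nop μ w x := by
  have hs := (liftNorm_pos x).ne'
  rw [principalPart, laplacian_conePotential hw, D2_conePotential_sphGrad hw, Nop, b2, sphGrad,
    ← liftNorm_sq]
  field_simp
  ring

/-- The coefficient matrix `b²(w)(I₂ + ξξᵀ) − μ(1 + |ξ|²)qqᵀ` of `principalPart μ w`. -/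
noncomputable def principalMatrix (μ : ℝ) (w : ℝ × ℝ → ℝ) (x : ℝ × ℝ) : Matrix (Fin 2) (Fin 2) ℝ :=
  b2 w x • (1 + vecMulVec ![x.1, x.2] ![x.1, x.2]) - (μ * (1 + x.1 ^ 2 + x.2 ^ 2)) •
    vecMulVec ![(sphGrad w x).1, (sphGrad w x).2] ![(sphGrad w x).1, (sphGrad w x).2]

theorem principalMatrix_apply (μ : ℝ) (w : ℝ × ℝ → ℝ) (x : ℝ × ℝ) (i j : Fin 2) :
    principalMatrix μ w x i j =
      b2 w x * ((1 : Matrix (Fin 2) (Fin 2) ℝ) i j + ![x.1, x.2] i * ![x.1, x.2] j) -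
        μ * (1 + x.1 ^ 2 + x.2 ^ 2) *
          (![(sphGrad w x).1, (sphGrad w x).2] i * ![(sphGrad w x).1, (sphGrad w x).2] j) := rfl

/-- The matrix of second partial derivatives of `f`. -/
noncomputable def hessian (f : ℝ × ℝ → ℝ) (x : ℝ × ℝ) : Matrix (Fin 2) (Fin 2) ℝ :=
  !![pd1 (pd1 f) x, pd1 (pd2 f) x; pd2 (pd1 f) x, pd2 (pd2 f) x]

theorem dotProduct_hessian_mulVec (f : ℝ × ℝ → ℝ) (x : ℝ × ℝ) (v : Fin 2 → ℝ) :
    v ⬝ᵥ hessian f x *ᵥ v = D2 f (v 0, v 1) (v 0, v 1) x := by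
  simp only [hessian, D2, mulVec, dotProduct, Fin.sum_univ_two, of_apply, cons_val', cons_val_zero,
    cons_val_one, cons_val_fin_one]
  ring

theorem principalPart_eq_trace (μ : ℝ) (w f : ℝ × ℝ → ℝ) (x : ℝ × ℝ) :
    principalPart μ w f x = (principalMatrix μ w x * hessian f x).trace := by
  simp only [trace_fin_two, mul_apply, Fin.sum_univ_two, principalMatrix_apply, hessian, of_apply,
    cons_val', cons_val_zero, cons_val_one, cons_val_fin_one, one_apply, ↓reduceIte, zero_ne_one,
    one_ne_zero, principalPart, D2]
  ring

theorem dotProduct_principalMatrix_mulVec (μ : ℝ) (w : ℝ × ℝ → ℝ) (x : ℝ × ℝ) (v : Fin 2 → ℝ) :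
    v ⬝ᵥ principalMatrix μ w x *ᵥ v =
      b2 w x * (v 0 ^ 2 + v 1 ^ 2 + (x.1 * v 0 + x.2 * v 1) ^ 2) -
        μ * ((1 + x.1 ^ 2 + x.2 ^ 2) * ((sphGrad w x).1 * v 0 + (sphGrad w x).2 * v 1) ^ 2) := by
  simp only [mulVec, dotProduct, Fin.sum_univ_two, principalMatrix_apply, cons_val_zero,
    cons_val_one, cons_val_fin_one, one_apply, ↓reduceIte, zero_ne_one, one_ne_zero]
  ring

theorem sphGrad_dot_sq_le (w : ℝ × ℝ → ℝ) (x : ℝ × ℝ) (p q : ℝ) :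
    ((sphGrad w x).1 * p + (sphGrad w x).2 * q) ^ 2 ≤
      (pd1 w x ^ 2 + pd2 w x ^ 2 + dotxi w x ^ 2) * (p ^ 2 + q ^ 2 + (x.1 * p + x.2 * q) ^ 2) := by
  have hdot : (sphGrad w x).1 * p + (sphGrad w x).2 * q =
      pd1 w x * p + pd2 w x * q + dotxi w x * (x.1 * p + x.2 * q) := by
    rw [sphGrad_fst, sphGrad_snd]
    ring
  rw [hdot]
  simpa [Fin.sum_univ_three] using Finset.sum_mul_sq_le_sq_mul_sq Finset.univ
    ![pd1 w x, pd2 w x, dotxi w x] ![p, q, x.1 * p + x.2 * q]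

theorem le_dotProduct_principalMatrix_mulVec (hμ : μ ≤ 1) (v : Fin 2 → ℝ) :
    (w x ^ 2 - 1) * (v 0 ^ 2 + v 1 ^ 2 + (x.1 * v 0 + x.2 * v 1) ^ 2) ≤
      v ⬝ᵥ principalMatrix μ w x *ᵥ v := by
  have hpos : 0 ≤ 1 + x.1 ^ 2 + x.2 ^ 2 := by positivity
  have hCS := mul_le_mul_of_nonneg_left (sphGrad_dot_sq_le w x (v 0) (v 1)) hpos
  have hμCS := mul_le_of_le_one_left (mul_nonneg hpos
    (sq_nonneg ((sphGrad w x).1 * v 0 + (sphGrad w x).2 * v 1))) hμ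
  rw [dotProduct_principalMatrix_mulVec, b2]
  linarith

theorem posDef_principalMatrix (hμ : μ ≤ 1) (hw : 1 < w x) : (principalMatrix μ w x).PosDef := by
  refine .of_dotProduct_mulVec_pos ?_ fun v hv => ?_
  · ext i j
    fin_cases i <;> fin_cases j <;> simp [principalMatrix, mul_comm]
  · have hv' : 0 < v 0 ^ 2 + v 1 ^ 2 := by
      simpa [dotProduct, Fin.sum_univ_two, sq] using dotProduct_star_self_pos_iff.2 hv
    have hw' : 0 < w x ^ 2 - 1 := by nlinarith
    rw [star_trivial]
    have hpos := mul_pos hw' (add_pos_of_pos_of_nonneg hv' (sq_nonneg (x.1 * v 0 + x.2 * v 1)))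
    exact hpos.trans_le (le_dotProduct_principalMatrix_mulVec hμ v)

theorem principalPart_neg_of_D2_neg (hμ : μ ≤ 1) (hw : 1 < w x) (hf : ∀ v, v ≠ 0 → D2 f v v x < 0) :
    principalPart μ w f x < 0 := by
  have hA := posDef_principalMatrix hμ hw
  rw [principalPart_eq_trace]
  refine trace_mul_neg_of_posSemidef hA.posSemidef ?_ fun v hv => ?_
  · rintro hzero
    simpa [hzero] using hA.diag_pos (i := 0)
  · rw [dotProduct_hessian_mulVec]
    refine hf _ fun h => hv ?_
    ext i
    fin_cases i
    exacts [congrArg Prod.fst h, congrArg Prod.snd h]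

end PrincipalPart

section ComparisonPrinciple

variable {μ : ℝ} {w : ℝ × ℝ → ℝ} {x : ℝ × ℝ} {Ω : Set (ℝ × ℝ)}

theorem Nop_pos_of_isLocalMin (hw : ContDiffAt ℝ 2 w x) (hw₁ : 1 < w x) (hmin : IsLocalMin w x) :
    0 < Nop μ w x := by
  have hcrit : fderiv ℝ w x = 0 := hmin.fderiv_eq_zero
  have hpd₁ : pd1 w x = 0 := by simp [pd1, hcrit]
  have hpd₂ : pd2 w x = 0 := by simp [pd2, hcrit]
  have hconvex (v : ℝ × ℝ) : 0 ≤ D2 w v v x :=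
    fderiv_fderiv_apply_eq_D2 hw v v ▸ fderiv_fderiv_nonneg_of_isLocalMin hw hmin v
  have hpd₁₁ : 0 ≤ pd1 (pd1 w) x := by simpa [D2] using hconvex (1, 0)
  have hpd₂₂ : 0 ≤ pd2 (pd2 w) x := by simpa [D2] using hconvex (0, 1)
  have hξξ := hconvex x
  have hw₂ : 0 < w x ^ 2 - 1 := by nlinarith
  have hN : Nop μ w x = (w x ^ 2 - 1) *
      (pd1 (pd1 w) x + pd2 (pd2 w) x + D2 w x x x + 2 * w x / (1 + x.1 ^ 2 + x.2 ^ 2)) := by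
    have hq : D2 w (gradv w x + dotxi w x • x) (gradv w x + dotxi w x • x) x = 0 := by
      simp [D2, gradv, dotxi, hpd₁, hpd₂]
    have hdot : dotxi w x = 0 := by simp only [dotxi, hpd₁, hpd₂, zero_mul, add_zero]
    rw [Nop, hq, b2, hdot, hpd₁, hpd₂]
    ring
  rw [hN]
  positivity

theorem Nop_neg_of_isLocalMax (hμ : μ ≤ 1) (hw : ContDiffAt ℝ 2 w x) (hw₁ : 1 < w x)
    (hmax : IsLocalMax (fun y => conePotential w y + liftNorm y ^ 2) x) : Nop μ w x < 0 := by
  have hψ : ContDiffAt ℝ 2 (conePotential w) x := hw.mul contDiff_liftNorm.contDiffAt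
  have hs : ContDiffAt ℝ 2 (fun y => liftNorm y ^ 2) x := (contDiff_liftNorm.pow 2).contDiffAt
  have hconcave (v : ℝ × ℝ) (hv : v ≠ 0) : D2 (conePotential w) v v x < 0 := by
    have hle := fderiv_fderiv_nonpos_of_isLocalMax (hψ.add hs) hmax v
    rw [fderiv_fderiv_apply_eq_D2 (hψ.add hs), D2_add hψ hs, D2_liftNorm_sq] at hle
    have hv' : 0 < v.1 * v.1 + v.2 * v.2 := by
      rcases not_and_or.1 (mt (fun h => Prod.ext h.1 h.2) hv) with h | h
      · exact add_pos_of_pos_of_nonneg (mul_self_pos.2 h) (mul_self_nonneg _)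
      · exact add_pos_of_nonneg_of_pos (mul_self_nonneg _) (mul_self_pos.2 h)
    linarith
  have hneg := principalPart_neg_of_D2_neg hμ hw₁ hconcave
  rw [principalPart_conePotential hw] at hneg
  exact neg_of_mul_neg_right hneg (liftNorm_pos x).le

theorem lt_of_Nop_nonpos (hΩ : IsOpen Ω) (hΩb : Bornology.IsBounded Ω)
    (hwc : ContinuousOn w (closure Ω)) (hw : ContDiffOn ℝ 2 w Ω) (hN : ∀ x ∈ Ω, Nop μ w x ≤ 0)
    (hw₁ : ∀ x ∈ Ω, 1 < w x) {m : ℝ} (hm : ∀ x ∈ frontier Ω, m ≤ w x) : ∀ x ∈ Ω, m < w x :=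
  lt_of_le_on_frontier_of_not_isLocalMin hΩ hΩb.isCompact_closure hwc
    (fun x hx hmin => (hN x hx).not_gt <|
      Nop_pos_of_isLocalMin (hw.contDiffAt (hΩ.mem_nhds hx)) (hw₁ x hx) hmin) hm

theorem le_of_Nop_nonneg (hμ : μ ≤ 1) (hΩ : IsOpen Ω) (hΩb : Bornology.IsBounded Ω)
    (hwc : ContinuousOn w (closure Ω)) (hw : ContDiffOn ℝ 2 w Ω) (hN : ∀ x ∈ Ω, 0 ≤ Nop μ w x)
    (hw₁ : ∀ x ∈ Ω, 1 < w x) {M : ℝ}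
    (hM : ∀ x ∈ frontier Ω, conePotential w x + liftNorm x ^ 2 ≤ M) : ∀ x ∈ Ω, w x ≤ M := by
  intro x hx
  have hcont : ContinuousOn (fun y => conePotential w y + liftNorm y ^ 2) (closure Ω) :=
    (hwc.mul continuous_liftNorm.continuousOn).add
      (continuous_liftNorm.pow 2).continuousOn
  calc w x ≤ conePotential w x :=
        le_mul_of_one_le_right (zero_le_one.trans (hw₁ x hx).le) (one_le_liftNorm x)
    _ ≤ conePotential w x + liftNorm x ^ 2 := le_add_of_nonneg_right (sq_nonneg _)
    _ ≤ M := le_of_le_on_frontier_of_not_isLocalMax hΩ hΩb.isCompact_closure hcont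
        (fun y hy hmax => (hN y hy).not_gt <|
          Nop_neg_of_isLocalMax hμ (hw.contDiffAt (hΩ.mem_nhds hy)) (hw₁ y hy) hmax) hM x hx

end ComparisonPrinciple

theorem Linfty_estimate_for_w_general
    (ΩD : Set (ℝ × ℝ)) (hΩo : IsOpen ΩD) (hΩb : Bornology.IsBounded ΩD) :
    ∃ C : ℝ, 0 < C ∧
      ∀ μ : ℝ, μ ≤ 1 →
      ∀ ε : ℝ, ε ≤ 1 →
      ∀ w : ℝ × ℝ → ℝ,
        ContinuousOn w (closure ΩD) →
        ContDiffOn ℝ 2 w ΩD →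
        (∀ x ∈ ΩD, Nop μ w x = 0) →
        (∀ x ∈ ΩD, 1 < w x) →
        (∀ x ∈ frontier ΩD, w x = 1 + ε) →
        ∀ x ∈ ΩD, 1 + ε < w x ∧ w x ≤ C := by
  have hK : IsCompact (frontier ΩD) := hΩb.isCompact_closure.of_isClosed_subset isClosed_frontier
    frontier_subset_closure
  obtain ⟨C, hC⟩ := hK.bddAbove_image (f := fun x => 2 * liftNorm x + liftNorm x ^ 2)
    ((continuous_const.mul continuous_liftNorm).add (continuous_liftNorm.pow 2)).continuousOn
  refine ⟨max C 1, by positivity, fun μ hμ ε hε w hwc hw hN hw₁ hbd x hx => ⟨?_, ?_⟩⟩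
  · exact lt_of_Nop_nonpos hΩo hΩb hwc hw (fun y hy => (hN y hy).le) hw₁ (fun y hy => (hbd y hy).ge)
      x hx
  · refine le_of_Nop_nonneg hμ hΩo hΩb hwc hw (fun y hy => (hN y hy).ge) hw₁ (fun y hy => ?_) x hx
    have hψ : conePotential w y ≤ 2 * liftNorm y := by
      rw [conePotential, hbd y hy]
      exact mul_le_mul_of_nonneg_right (by linarith) (liftNorm_pos y).le
    exact (add_le_add_left hψ _).trans ((hC ⟨y, hy, rfl⟩).trans (le_max_left C 1))

/-- `L^∞` estimate (Lemma 3.2): on an open bounded convex domain there is a constant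
`C > 0`, depending only on the domain, such that every solution `w` of `𝒩_μ w = 0`
(`μ ∈ [0,1]`) with `w > 1` inside and `w = 1 + ε` on the boundary (`ε ∈ (0,1]`)
satisfies `1 + ε < w ≤ C` throughout the domain. -/
theorem Linfty_estimate_for_w
    (ΩD : Set (ℝ × ℝ)) (hΩo : IsOpen ΩD) (hΩb : Bornology.IsBounded ΩD)
    (hΩc : Convex ℝ ΩD) :
    ∃ C : ℝ, 0 < C ∧
      ∀ μ : ℝ, 0 ≤ μ → μ ≤ 1 →
      ∀ ε : ℝ, 0 < ε → ε ≤ 1 →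
      ∀ w : ℝ × ℝ → ℝ,
        ContinuousOn w (closure ΩD) →
        ContDiffOn ℝ 2 w ΩD →
        (∀ x ∈ ΩD, Nop μ w x = 0) →
        (∀ x ∈ ΩD, 1 < w x) →
        (∀ x ∈ frontier ΩD, w x = 1 + ε) →
        ∀ x ∈ ΩD, 1 + ε < w x ∧ w x ≤ C := by
  obtain ⟨C, hC, hbound⟩ := Linfty_estimate_for_w_general ΩD hΩo hΩb
  exact ⟨C, hC, fun μ _ hμ ε _ hε => hbound μ hμ ε hε⟩
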